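/- For 0 ≤ m ≤ n−1, the number of k-Dyck paths of size n with exactly m+1 peaks (occurrences of the pattern UD) equals (1/n) binomial(nk, m) binomial(n, n−m−1) (the generalized Runyon number). -/

import Mathlib

/-- A `k`-Dyck path of size `n`: `true` = up step `U`, `false` = down step `D`;
the path stays weakly above `y = x/k`. -/
def IsKDyckPath (k n : ℕ) (w : List Bool) : Prop :=
  w.count true = n ∧ w.count false = k * n ∧
  ∀ i, (w.take i).count false ≤ k * (w.take i).count true

/-- The number of peaks of a path: occurrences of the factor `UD`,
i.e. positions `i` with `w[i] = U` and `w[i+1] = D`. -/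
def numPeaks (w : List Bool) : ℕ :=
  ((Finset.range w.length).filter
    (fun i => w.getD i false = true ∧ w.getD (i + 1) true = false)).card

namespace RunyonAux

/-- every suffix has at least `k` times as many `D`s as `U`s -/
def Good (k : ℕ) : List Bool → Prop
  | [] => True
  | c :: w => k * (c :: w).count true ≤ (c :: w).count false ∧ Good k w

/-- recursive peak count -/
def pk : List Bool → ℕ
  | [] => 0
  | c :: w => pk w + if c = true ∧ w.head? = some false then 1 else 0

theorem good_iff (k : ℕ) (w : List Bool) :
    Good k w ↔ ∀ i, k * (w.drop i).count true ≤ (w.drop i).count false := by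
  induction w with
  | nil => simp [Good]
  | cons c w ih =>
    rw [Good, ih]
    constructor
    · rintro ⟨h1, h2⟩ i
      cases i with
      | zero => simpa using h1
      | succ i => simpa using h2 i
    · intro h
      exact ⟨by simpa using h 0, fun i => by simpa using h (i + 1)⟩

theorem good_count {k : ℕ} {w : List Bool} (h : Good k w) :
    k * w.count true ≤ w.count false := by
  simpa using (good_iff k w).1 h 0

theorem numPeaks_eq (w : List Bool) : numPeaks w = pk w := by
  induction w with
  | nil => simp [numPeaks, pk]
  | cons c w ih =>
    rw [pk, ← ih]
    unfold numPeaks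
    rw [Finset.card_filter, Finset.card_filter, List.length_cons, Finset.sum_range_succ']
    congr 1
    cases w with
    | nil => simp
    | cons d w => simp

theorem dyck_iff (k n : ℕ) (w : List Bool) :
    IsKDyckPath k n w ↔ Good k w ∧ w.count true = n ∧ w.count false = k * n := by
  rw [good_iff]
  unfold IsKDyckPath
  have key : ∀ i, w.count true = n → w.count false = k * n →
      ((w.take i).count false ≤ k * (w.take i).count true ↔
        k * (w.drop i).count true ≤ (w.drop i).count false) := by
    intro i h1 h2
    have e1 : (w.take i).count true + (w.drop i).count true = n := by
      rw [← List.count_append, List.take_append_drop, h1]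
    have e2 : (w.take i).count false + (w.drop i).count false = k * n := by
      rw [← List.count_append, List.take_append_drop, h2]
    rw [← e1, mul_add] at e2
    omega
  constructor
  · rintro ⟨h1, h2, h3⟩
    exact ⟨fun i => (key i h1 h2).1 (h3 i), h1, h2⟩
  · rintro ⟨h3, h1, h2⟩
    exact ⟨h1, h2, fun i => (key i h1 h2).2 (h3 i)⟩

theorem pk_pos {k : ℕ} (hk : 1 ≤ k) (w : List Bool) (h : Good k w) :
    w.count true = 0 ∨ 1 ≤ pk w := by
  induction w with
  | nil => simp
  | cons c w ih =>
    obtain ⟨h1, h2⟩ := h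
    cases c with
    | false =>
      rcases ih h2 with h | h
      · left; simpa using h
      · right; simp [pk]; omega
    | true =>
      right
      rcases ih h2 with h | h
      · cases w with
        | nil => simp at h1; omega
        | cons d w =>
          cases d with
          | false => simp [pk]
          | true => simp at h
      · simp only [pk]; omega

def S (k a b p : ℕ) : Set (List Bool) :=
  {w | Good k w ∧ w.count true = b ∧ w.count false = a ∧ pk w = p}

def SU (k a b p : ℕ) : Set (List Bool) :=
  {w | w ∈ S k a b p ∧ w.head? = some true}

theorem count_len (w : List Bool) : w.length = w.count true + w.count false := by
  exact (List.count_true_add_count_false w).symm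

theorem S_fin (k a b p : ℕ) : (S k a b p).Finite := by
  apply (List.finite_length_eq Bool (b + a)).subset
  rintro w ⟨_, h1, h2, _⟩
  change w.length = b + a
  rw [count_len, h1, h2]

theorem SU_fin (k a b p : ℕ) : (SU k a b p).Finite :=
  (S_fin k a b p).subset fun _ h => h.1

theorem cons_inj (c : Bool) : Function.Injective (List.cons c) :=
  fun _ _ h => (List.cons.inj h).2

theorem false_mem (k a b p : ℕ) (w : List Bool) :
    false :: w ∈ S k (a + 1) b p ↔ w ∈ S k a b p := by
  simp only [S, Set.mem_ofPred_eq, Good, pk]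
  constructor
  · rintro ⟨⟨_, h⟩, h1, h2, h3⟩
    simp at h1 h2 h3
    exact ⟨h, h1, h2, h3⟩
  · rintro ⟨h, h1, h2, h3⟩
    have := good_count h
    refine ⟨⟨?_, h⟩, ?_, ?_, ?_⟩ <;> simp <;> omega

theorem S_split (k a b p : ℕ) :
    (S k (a + 1) b p).ncard = (S k a b p).ncard + (SU k (a + 1) b p).ncard := by
  have : S k (a + 1) b p = List.cons false '' S k a b p ∪ SU k (a + 1) b p := by
    ext w
    constructor
    · intro h
      match w, h with
      | [], h => simp [S] at h
      | false :: w, h => exact Or.inl ⟨w, (false_mem ..).1 h, rfl⟩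
      | true :: w, h => exact Or.inr ⟨h, rfl⟩
    · rintro (⟨v, hv, rfl⟩ | h)
      · exact (false_mem ..).2 hv
      · exact h.1
  rw [this, Set.ncard_union_eq _ ((S_fin ..).image _) (SU_fin ..),
    Set.ncard_image_of_injective _ (cons_inj false)]
  rw [Set.disjoint_left]
  rintro _ ⟨v, _, rfl⟩ h
  simp [SU] at h

theorem SU_split (k a b p : ℕ) (h : k * (b + 1) ≤ a + 1) :
    (SU k (a + 1) (b + 1) (p + 1)).ncard
      = (S k a b p).ncard + (SU k (a + 1) b (p + 1)).ncard := by
  have : SU k (a + 1) (b + 1) (p + 1) =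
      List.cons true '' (List.cons false '' S k a b p ∪ SU k (a + 1) b (p + 1)) := by
    ext w
    constructor
    · rintro ⟨h, h'⟩
      match w, h, h' with
      | [true], h, _ => simp [S] at h
      | true :: false :: w, h, _ =>
        refine ⟨_, Or.inl ⟨w, (false_mem ..).1 ?_, rfl⟩, rfl⟩
        obtain ⟨h0, h1, h2, h3⟩ := h
        rw [pk] at h3
        simp at h1 h2 h3
        refine ⟨h0.2, ?_, ?_, ?_⟩ <;> (try simp) <;> omega
      | true :: true :: w, h, _ =>
        refine ⟨_, Or.inr ⟨?_, rfl⟩, rfl⟩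
        obtain ⟨h0, h1, h2, h3⟩ := h
        rw [pk] at h3
        simp at h1 h2 h3
        refine ⟨h0.2, ?_, ?_, ?_⟩ <;> (try simp) <;> omega
    · rintro ⟨_, (⟨v, hv, rfl⟩ | ⟨hw, h'⟩), rfl⟩
      · obtain ⟨h0, h1, h2, h3⟩ := (false_mem ..).2 hv
        refine ⟨⟨⟨?_, h0⟩, ?_, ?_, ?_⟩, rfl⟩
        · rw [List.count_cons_self, h1, List.count_cons_of_ne (by simp), h2]; exact h
        · rw [List.count_cons_self, h1]
        · rw [List.count_cons_of_ne (by simp), h2]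
        · rw [pk, h3]; simp
      · obtain ⟨h0, h1, h2, h3⟩ := hw
        refine ⟨⟨⟨?_, h0⟩, ?_, ?_, ?_⟩, rfl⟩
        · rw [List.count_cons_self, h1, List.count_cons_of_ne (by simp), h2]; exact h
        · rw [List.count_cons_self, h1]
        · rw [List.count_cons_of_ne (by simp), h2]
        · rw [pk, h3, h']; simp
  rw [this, Set.ncard_image_of_injective _ (cons_inj true),
    Set.ncard_union_eq _ ((S_fin ..).image _) (SU_fin ..),
    Set.ncard_image_of_injective _ (cons_inj false)]
  rw [Set.disjoint_left]
  rintro _ ⟨v, _, rfl⟩ h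
  simp [SU] at h

theorem S_zero_peaks (k a b : ℕ) (hk : 1 ≤ k) : (S k a (b + 1) 0).ncard = 0 := by
  rw [Set.ncard_eq_zero (S_fin ..), Set.eq_empty_iff_forall_notMem]
  rintro w ⟨h0, h1, h2, h3⟩
  rcases pk_pos hk w h0 with h | h <;> omega

theorem S_bad (k a b p : ℕ) (h : a < k * b) : (S k a b p).ncard = 0 := by
  rw [Set.ncard_eq_zero (S_fin ..), Set.eq_empty_iff_forall_notMem]
  rintro w ⟨h0, h1, h2, h3⟩
  have := good_count h0
  rw [h1, h2] at this
  omega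

theorem SU_zero (k a p : ℕ) : (SU k a 0 p).ncard = 0 := by
  rw [Set.ncard_eq_zero (SU_fin ..), Set.eq_empty_iff_forall_notMem]
  rintro w ⟨⟨h0, h1, h2, h3⟩, h4⟩
  cases w with
  | nil => simp at h4
  | cons c w => simp at h4; subst h4; simp at h1

theorem S_nil (k a p : ℕ) : (S k a 0 p).ncard = if p = 0 then 1 else 0 := by
  induction a with
  | succ a ih => rw [S_split, ih, SU_zero, add_zero]
  | zero =>
    have e : ∀ w : List Bool, w ∈ S k 0 0 p ↔ w = [] ∧ p = 0 := by
      intro w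
      constructor
      · rintro ⟨h0, h1, h2, h3⟩
        have := count_len w
        rw [h1, h2] at this
        have hw : w = [] := List.eq_nil_of_length_eq_zero this
        subst hw
        exact ⟨rfl, by simpa [pk] using h3.symm⟩
      · rintro ⟨rfl, rfl⟩
        simp [S, Good, pk]
    split_ifs with hp
    · have : S k 0 0 p = {[]} := by ext w; rw [e]; simp [hp]
      rw [this]; simp
    · have : S k 0 0 p = ∅ := by ext w; rw [e]; simp [hp]
      rw [this]; simp

theorem choose_q (A q : ℕ) : (A.choose (q + 1) : ℚ) = (A - q) * A.choose q / (q + 1) := by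
  have h := Nat.choose_succ_right_eq A q
  rw [eq_div_iff (by positivity)]
  rcases le_or_gt q A with hq | hq
  · have h' : (A.choose (q + 1) : ℚ) * (q + 1) = A.choose q * ((A - q : ℕ) : ℚ) := by
      exact_mod_cast h
    rw [h', Nat.cast_sub hq]; ring
  · rw [Nat.choose_eq_zero_of_lt hq, Nat.choose_eq_zero_of_lt (by omega)]; simp

theorem main (k : ℕ) (hk : 1 ≤ k) (b : ℕ) : ∀ a p, k * (b + 1) ≤ a + 1 →
    ((S k a (b + 1) (p + 1)).ncard : ℚ)
      = (a + 1 - k * (b + 1)) * a.choose p * b.choose p / (p + 1) := by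
  induction b with
  | zero =>
    intro a
    induction a with
    | zero =>
      intro p h
      have : k = 1 := by omega
      subst this
      rw [S_bad _ _ _ _ (by omega)]; simp
    | succ a ih =>
      intro p h
      rcases Nat.eq_or_lt_of_le h with h' | h'
      · rw [S_bad _ _ _ _ (by omega)]
        have : (k : ℚ) * (0 + 1) = a + 1 + 1 := by exact_mod_cast h'
        push_cast
        rw [this]; simp
      · rw [S_split, SU_split _ _ _ _ (by omega), SU_zero, S_nil]
        push_cast
        rw [ih p (by omega)]
        cases p with
        | zero => simp; ring
        | succ p => simp
  | succ b ihb =>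
    intro a
    induction a with
    | zero =>
      intro p h
      have : 1 * (b + 1 + 1) ≤ k * (b + 1 + 1) := Nat.mul_le_mul_right _ hk
      omega
    | succ a ih =>
      intro p h
      rcases Nat.eq_or_lt_of_le h with h' | h'
      · rw [S_bad _ _ _ _ (by omega)]
        have : (k : ℚ) * (b + 1 + 1) = a + 1 + 1 := by exact_mod_cast h'
        push_cast
        rw [this]; simp
      · have e1 := S_split k a (b + 1 + 1) (p + 1)
        have e2 := SU_split k a (b + 1) p (by omega)
        have e3 := S_split k a (b + 1) (p + 1)
        have hb : k * (b + 1) ≤ a + 1 := by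
          have : k * (b + 1 + 1) = k * (b + 1) + k := by ring
          omega
        have i1 := ih p (by omega)
        have i2 := ihb (a + 1) p (by omega)
        have i3 := ihb a p hb
        have e : ((S k (a + 1) (b + 1 + 1) (p + 1)).ncard : ℚ)
            = (S k a (b + 1 + 1) (p + 1)).ncard + (S k a (b + 1) p).ncard
              + (S k (a + 1) (b + 1) (p + 1)).ncard - (S k a (b + 1) (p + 1)).ncard := by
          rw [e1, e2, e3]; push_cast; ring
        rw [e, i1, i2, i3]
        cases p with
        | zero => rw [S_zero_peaks _ _ _ hk]; simp; ring
        | succ q =>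
          rw [ihb a q hb, Nat.choose_succ_succ a q, Nat.choose_succ_succ b q]
          push_cast
          rw [choose_q a q, choose_q b q]
          have : (q : ℚ) + 1 ≠ 0 := by positivity
          have : (q : ℚ) + 1 + 1 ≠ 0 := by positivity
          field_simp
          ring

end RunyonAux

/-- The number of `k`-Dyck paths of size `n` with exactly `m+1` peaks is the
generalized Runyon number `(1/n) C(nk, m) C(n, n-m-1)`. -/
theorem kDyck_peaks_runyon (k n m : ℕ) (hk : 1 ≤ k) (hn : 1 ≤ n) (hm : m + 1 ≤ n) :
    ({w : List Bool | IsKDyckPath k n w ∧ numPeaks w = m + 1}.ncard : ℚ)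
      = (1 / (n : ℚ)) * ((n * k).choose m : ℚ) * (n.choose (n - m - 1) : ℚ) := by
  have hset : {w : List Bool | IsKDyckPath k n w ∧ numPeaks w = m + 1}
      = RunyonAux.S k (k * n) n (m + 1) := by
    ext w
    simp only [RunyonAux.S, Set.mem_ofPred_eq, RunyonAux.dyck_iff, RunyonAux.numPeaks_eq, and_assoc]
  obtain ⟨b, rfl⟩ : ∃ b, n = b + 1 := ⟨n - 1, by omega⟩
  have hc : ((b + 1).choose (m + 1) : ℚ) * (m + 1) = (b + 1) * b.choose m := by
    exact_mod_cast (Nat.add_one_mul_choose_eq b m).symm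
  rw [hset, RunyonAux.main k hk b (k * (b + 1)) m (by omega),
    show b + 1 - m - 1 = b + 1 - (m + 1) by omega, Nat.choose_symm hm, mul_comm (b + 1) k]
  have h1 : (m : ℚ) + 1 ≠ 0 := by positivity
  have h2 : (b : ℚ) + 1 ≠ 0 := by positivity
  rw [eq_div_of_mul_eq h1 hc]
  push_cast
  field_simp
  ring
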